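/- Let (Ω, 𝓕, P) be a probability space and B : [0,1] × Ω → ℝ a standard Brownian motion: B_0 = 0 almost surely, for 0 ≤ s ≤ t ≤ 1 the increment B_t − B_s is independent of (B_r)_{r ≤ s} and is Gaussian with mean 0 and variance t − s, and t ↦ B_t(ω) is continuous for almost every ω. Let f : ℝ → ℝ be smooth and bounded with bounded first and second derivatives. For n ∈ ℕ let t_i = i/n be the uniform partition of [0,1]. Then the random variables ∑_{i=0}^{n−1} f((B_{t_i} + B_{t_{i+1}})/2)(B_{t_{i+1}} − B_{t_i}) − ∑_{i=0}^{n−1} f(B_{t_i})(B_{t_{i+1}} − B_{t_i}) converge in L²(P), as n → ∞, to (1/2) ∫_0^1 f'(B_t) dt. -/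

import Mathlib

open Filter Finset MeasureTheory ProbabilityTheory

/-!
Put `q(x, h) = θ ∫₀¹ f'(x + uθh) du`, so that `f(x + θh) - f(x) = q(x, h) h` and
`q(x, 0) = θ f'(x)`; the midpoint rule is `θ = 1/2`. The difference of the two Riemann sums is then
a weighted quadratic variation `∑ q(Bᵢ, ΔBᵢ) (ΔBᵢ)²`, and for every bounded continuous `q` such sums
converge in `L²` to `∫ q(Bₜ, 0) dt`. Indeed, replacing `q(Bᵢ, ΔBᵢ)` by `q(Bᵢ, 0)` costs at most
`sup |q(Bᵢ, ΔBᵢ) - q(Bᵢ, 0)|`, which vanishes by uniform continuity along the path, times the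
quadratic variation, which tends to `1` in `L²`; replacing `(ΔBᵢ)²` by its mean `1/n` leaves a sum
of orthogonal martingale differences, of variance `O(1/n)`; what remains is a Riemann sum along a
continuous path.
-/

open scoped Topology NNReal ENNReal

section UniformPartition

lemma Icc_div_subset_unitInterval {n i : ℕ} (hi : i < n) :
    Set.Icc ((i : ℝ) / n) (((i : ℝ) + 1) / n) ⊆ Set.Icc 0 1 := by
  have hn : (0 : ℝ) < n := by exact_mod_cast i.zero_le.trans_lt hi
  refine Set.Icc_subset_Icc (by positivity) ?_
  rw [div_le_one hn]
  exact_mod_cast hi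

lemma div_le_add_one_div (n i : ℕ) : (i : ℝ) / n ≤ ((i : ℝ) + 1) / n := by
  gcongr
  exact le_add_of_nonneg_right zero_le_one

lemma eventually_norm_le_of_diagonal_eq_zero {E : Type*} [SeminormedAddCommGroup E]
    {G : ℝ × ℝ → E} (hG : ContinuousOn G (Set.Icc 0 1 ×ˢ Set.Icc 0 1))
    (hdiag : ∀ t ∈ Set.Icc (0 : ℝ) 1, G (t, t) = 0) {ε : ℝ} (hε : 0 < ε) :
    ∀ᶠ n : ℕ in atTop, ∀ i < n, ∀ t ∈ Set.Icc ((i : ℝ) / n) (((i : ℝ) + 1) / n),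
      ‖G ((i : ℝ) / n, t)‖ ≤ ε := by
  have huc := (isCompact_Icc.prod isCompact_Icc).uniformContinuousOn_of_continuous hG
  obtain ⟨δ, hδ, hGδ⟩ := Metric.uniformContinuousOn_iff_le.1 huc ε hε
  filter_upwards [tendsto_one_div_atTop_nhds_zero_nat.eventually_le_const hδ] with n hn i hi t ht
  have hs : (i : ℝ) / n ∈ Set.Icc (0 : ℝ) 1 :=
    Icc_div_subset_unitInterval hi (Set.left_mem_Icc.2 (div_le_add_one_div n i))
  have hdist : dist ((i : ℝ) / n, t) ((i : ℝ) / n, (i : ℝ) / n) ≤ δ := by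
    rw [Prod.dist_eq, dist_self, max_eq_right dist_nonneg, Real.dist_eq,
      abs_of_nonneg (sub_nonneg.2 ht.1)]
    linarith [ht.2, add_div (i : ℝ) 1 n]
  simpa only [hdiag _ hs, dist_zero_right] using
    hGδ _ ⟨hs, Icc_div_subset_unitInterval hi ht⟩ _ ⟨hs, hs⟩ hdist

lemma tendsto_iSup_norm_of_diagonal_eq_zero {E : Type*} [SeminormedAddCommGroup E]
    {G : ℝ × ℝ → E} (hG : ContinuousOn G (Set.Icc 0 1 ×ˢ Set.Icc 0 1))
    (hdiag : ∀ t ∈ Set.Icc (0 : ℝ) 1, G (t, t) = 0) :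
    Tendsto (fun n : ℕ => ⨆ i : Fin n, ‖G ((i : ℝ) / n, ((i : ℝ) + 1) / n)‖) atTop (𝓝 0) := by
  rw [Metric.tendsto_nhds]
  intro ε hε
  filter_upwards [eventually_norm_le_of_diagonal_eq_zero hG hdiag (half_pos hε)] with n hn
  rw [Real.dist_0_eq_abs, abs_of_nonneg (Real.iSup_nonneg fun _ => norm_nonneg _)]
  refine (Real.iSup_le (fun i => ?_) (half_pos hε).le).trans_lt (half_lt_self hε)
  exact hn i i.2 _ (Set.right_mem_Icc.2 (div_le_add_one_div n i))

lemma tendsto_iSup_abs_apply_increment_sub {q : ℝ → ℝ → ℝ} (hq : Continuous (Function.uncurry q))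
    {b : ℝ → ℝ} (hb : ContinuousOn b (Set.Icc 0 1)) :
    Tendsto (fun n : ℕ => ⨆ i : Fin n, |q (b ((i : ℝ) / n))
      (b (((i : ℝ) + 1) / n) - b ((i : ℝ) / n)) - q (b ((i : ℝ) / n)) 0|) atTop (𝓝 0) := by
  have hs : ContinuousOn (fun p : ℝ × ℝ => b p.1) (Set.Icc 0 1 ×ˢ Set.Icc 0 1) :=
    hb.comp continuousOn_fst fun _ hp => hp.1
  have ht : ContinuousOn (fun p : ℝ × ℝ => b p.2) (Set.Icc 0 1 ×ˢ Set.Icc 0 1) :=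
    hb.comp continuousOn_snd fun _ hp => hp.2
  exact tendsto_iSup_norm_of_diagonal_eq_zero
    (G := fun p => q (b p.1) (b p.2 - b p.1) - q (b p.1) 0)
    ((hq.comp_continuousOn (hs.prodMk (ht.sub hs))).sub
      (hq.comp_continuousOn (hs.prodMk continuousOn_const)))
    fun _ _ => by simp only [sub_self]

lemma norm_smul_sub_integral_le {E : Type*} [NormedAddCommGroup E] [NormedSpace ℝ E]
    [CompleteSpace E] {g : ℝ → E} {a b ε : ℝ} (hab : a ≤ b)
    (hg : IntervalIntegrable g volume a b) (hε : ∀ t ∈ Set.Icc a b, ‖g a - g t‖ ≤ ε) :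
    ‖(b - a) • g a - ∫ t in a..b, g t‖ ≤ ε * (b - a) := by
  rw [← intervalIntegral.integral_const, ← intervalIntegral.integral_sub (by simp) hg,
    ← abs_of_nonneg (sub_nonneg.2 hab)]
  refine intervalIntegral.norm_integral_le_of_norm_le_const fun t ht => hε t ?_
  rw [Set.uIoc_of_le hab] at ht
  exact Set.Ioc_subset_Icc_self ht

lemma tendsto_leftRiemannSum {E : Type*} [NormedAddCommGroup E] [NormedSpace ℝ E]
    [CompleteSpace E] {g : ℝ → E} (hg : ContinuousOn g (Set.Icc 0 1)) :
    Tendsto (fun n : ℕ => ∑ i ∈ range n, (1 / n : ℝ) • g ((i : ℝ) / n)) atTop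
      (𝓝 (∫ t in (0 : ℝ)..1, g t)) := by
  rw [Metric.tendsto_nhds]
  intro ε hε
  have hG : ContinuousOn (fun p : ℝ × ℝ => g p.1 - g p.2) (Set.Icc 0 1 ×ˢ Set.Icc 0 1) :=
    (hg.comp continuousOn_fst fun _ hp => hp.1).sub (hg.comp continuousOn_snd fun _ hp => hp.2)
  filter_upwards [eventually_norm_le_of_diagonal_eq_zero hG (fun _ _ => sub_self _) (half_pos hε),
    eventually_gt_atTop 0] with n hosc hn
  have hn0 : (n : ℝ) ≠ 0 := by positivity
  have hint : ∀ i < n, IntervalIntegrable g volume ((i : ℝ) / n) (((i : ℝ) + 1) / n) :=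
    fun i hi => ContinuousOn.intervalIntegrable_of_Icc (div_le_add_one_div n i)
      (hg.mono (Icc_div_subset_unitInterval hi))
  have hsplit : ∑ i ∈ range n, ∫ t in ((i : ℝ) / n)..(((i : ℝ) + 1) / n), g t =
      ∫ t in (0 : ℝ)..1, g t := by
    have h := intervalIntegral.sum_integral_adjacent_intervals (μ := volume) (f := g)
      (a := fun i : ℕ => (i : ℝ) / n) (n := n) (by simpa only [Nat.cast_succ] using hint)
    simpa only [Nat.cast_succ, Nat.cast_zero, zero_div, div_self hn0] using h
  have hcell : ∀ i ∈ range n, ‖(1 / n : ℝ) • g ((i : ℝ) / n) -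
      ∫ t in ((i : ℝ) / n)..(((i : ℝ) + 1) / n), g t‖ ≤ ε / 2 * (1 / n) := by
    intro i hi
    have h := norm_smul_sub_integral_le (div_le_add_one_div n i) (hint i (mem_range.1 hi))
      (hosc i (mem_range.1 hi))
    rwa [show ((i : ℝ) + 1) / n - (i : ℝ) / n = 1 / n by ring] at h
  rw [← hsplit, dist_eq_norm, ← sum_sub_distrib]
  calc ‖∑ i ∈ range n, ((1 / n : ℝ) • g ((i : ℝ) / n) -
          ∫ t in ((i : ℝ) / n)..(((i : ℝ) + 1) / n), g t)‖
      ≤ ∑ _i ∈ range n, ε / 2 * (1 / n) := norm_sum_le_of_le _ hcell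
    _ = ε / 2 := by rw [sum_const, card_range, nsmul_eq_mul]; field_simp
    _ < ε := half_lt_self hε

end UniformPartition

section MeanDerivative

/-- The mean `∫₀¹ f'(x + u h) du` of `f'` over the segment from `x` to `x + h`: the difference
quotient of `f`, extended continuously by `f' x` at `h = 0`. -/
noncomputable def meanDeriv (f : ℝ → ℝ) (x h : ℝ) : ℝ := ∫ u in (0 : ℝ)..1, deriv f (x + u * h)

variable {f : ℝ → ℝ}

lemma meanDeriv_zero (x : ℝ) : meanDeriv f x 0 = deriv f x := by simp [meanDeriv]

lemma mul_meanDeriv (hf : ContDiff ℝ 1 f) (x h : ℝ) : h * meanDeriv f x h = f (x + h) - f x :=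
  intervalIntegral.integral_unitInterval_deriv_eq_sub
    ((hf.continuous_deriv_one.comp (by fun_prop)).continuousOn)
    fun _ _ => (hf.differentiable one_ne_zero _).hasDerivAt

lemma continuous_uncurry_meanDeriv (hf : ContDiff ℝ 1 f) :
    Continuous (Function.uncurry (meanDeriv f)) := by
  have hcont : Continuous (Function.uncurry fun (p : ℝ × ℝ) u => deriv f (p.1 + u * p.2)) :=
    hf.continuous_deriv_one.comp (by fun_prop)
  exact intervalIntegral.continuous_parametric_intervalIntegral_of_continuous' hcont 0 1

lemma abs_meanDeriv_le {C : ℝ} (hC : ∀ a, |deriv f a| ≤ C) (x h : ℝ) : |meanDeriv f x h| ≤ C := by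
  simpa [meanDeriv] using intervalIntegral.norm_integral_le_of_norm_le_const (a := 0) (b := 1)
    (f := fun u => deriv f (x + u * h)) fun u _ => hC (x + u * h)

end MeanDerivative

section Probability

variable {Ω : Type*} {mΩ : MeasurableSpace Ω} {P : Measure Ω}

section LpConvergence

lemma tendsto_eLpNorm_add {E ι : Type*} [NormedAddCommGroup E] {l : Filter ι} {p : ℝ≥0∞}
    (hp : 1 ≤ p) {X Y : ι → Ω → E} (hX : ∀ n, AEStronglyMeasurable (X n) P)
    (hY : ∀ n, AEStronglyMeasurable (Y n) P)
    (hX0 : Tendsto (fun n => eLpNorm (X n) p P) l (𝓝 0))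
    (hY0 : Tendsto (fun n => eLpNorm (Y n) p P) l (𝓝 0)) :
    Tendsto (fun n => eLpNorm (X n + Y n) p P) l (𝓝 0) :=
  tendsto_of_tendsto_of_tendsto_of_le_of_le tendsto_const_nhds (by simpa using hX0.add hY0)
    (fun _ => zero_le) fun n => eLpNorm_add_le (hX n) (hY n) hp

lemma tendsto_eLpNorm_zero_of_bounded {E : Type*} [NormedAddCommGroup E] [IsFiniteMeasure P]
    {p : ℝ≥0∞} (hp : 1 ≤ p) (hp_top : p ≠ ∞) {X : ℕ → Ω → E} {C : ℝ}
    (hX : ∀ n, AEStronglyMeasurable (X n) P) (hC : ∀ n, ∀ᵐ ω ∂P, ‖X n ω‖ ≤ C)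
    (hX0 : ∀ᵐ ω ∂P, Tendsto (fun n => X n ω) atTop (𝓝 0)) :
    Tendsto (fun n => eLpNorm (X n) p P) atTop (𝓝 0) := by
  have hui : UnifIntegrable X p P := by
    refine unifIntegrable_of hp hp_top hX fun ε _ => ⟨(C + 1).toNNReal, fun n => ?_⟩
    have hzero : {ω | (C + 1).toNNReal ≤ ‖X n ω‖₊}.indicator (X n) =ᵐ[P] 0 := by
      filter_upwards [hC n] with ω hω
      refine Set.indicator_of_notMem (fun hmem => ?_) _
      have h : C + 1 ≤ ‖X n ω‖ := Real.toNNReal_le_iff_le_coe.1 hmem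
      linarith
    rw [eLpNorm_congr_ae hzero, eLpNorm_zero]
    exact zero_le
  have h := tendsto_Lp_finite_of_tendsto_ae (g := 0) hp hp_top hX MemLp.zero hui hX0
  simpa only [sub_zero] using h

lemma aestronglyMeasurable_integral_of_continuousOn {E : Type*} [NormedAddCommGroup E]
    [NormedSpace ℝ E] [CompleteSpace E] {Y : ℝ → Ω → E} (hY : ∀ t, AEStronglyMeasurable (Y t) P)
    (hcont : ∀ᵐ ω ∂P, ContinuousOn (fun t => Y t ω) (Set.Icc 0 1)) :
    AEStronglyMeasurable (fun ω => ∫ t in (0 : ℝ)..1, Y t ω) P := by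
  have hsum : ∀ n : ℕ,
      AEStronglyMeasurable (fun ω => ∑ i ∈ range n, (1 / n : ℝ) • Y ((i : ℝ) / n) ω) P := fun n =>
    Finset.aestronglyMeasurable_fun_sum _ fun i _ => (hY ((i : ℝ) / n)).const_smul (1 / n : ℝ)
  exact aestronglyMeasurable_of_tendsto_ae atTop hsum
    (hcont.mono fun ω hω => tendsto_leftRiemannSum (g := fun t => Y t ω) hω)

lemma aestronglyMeasurable_leftRiemannSum_sub_integral {E : Type*} [NormedAddCommGroup E]
    [NormedSpace ℝ E] [CompleteSpace E] {Y : ℝ → Ω → E} (hY : ∀ t, AEStronglyMeasurable (Y t) P)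
    (hcont : ∀ᵐ ω ∂P, ContinuousOn (fun t => Y t ω) (Set.Icc 0 1)) (n : ℕ) :
    AEStronglyMeasurable (fun ω => ∑ i ∈ range n, (1 / n : ℝ) • Y ((i : ℝ) / n) ω -
      ∫ t in (0 : ℝ)..1, Y t ω) P :=
  (Finset.aestronglyMeasurable_fun_sum (range n) fun (i : ℕ) _ =>
    (hY ((i : ℝ) / n)).const_smul (1 / n : ℝ)).sub
      (aestronglyMeasurable_integral_of_continuousOn hY hcont)

lemma tendsto_eLpNorm_leftRiemannSum_sub_integral {E : Type*} [NormedAddCommGroup E]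
    [NormedSpace ℝ E] [CompleteSpace E] [IsFiniteMeasure P] {p : ℝ≥0∞} (hp : 1 ≤ p)
    (hp_top : p ≠ ∞) {Y : ℝ → Ω → E} {C : ℝ} (hY : ∀ t, AEStronglyMeasurable (Y t) P)
    (hC : ∀ t ω, ‖Y t ω‖ ≤ C) (hcont : ∀ᵐ ω ∂P, ContinuousOn (fun t => Y t ω) (Set.Icc 0 1)) :
    Tendsto (fun n : ℕ => eLpNorm (fun ω => ∑ i ∈ range n, (1 / n : ℝ) • Y ((i : ℝ) / n) ω -
      ∫ t in (0 : ℝ)..1, Y t ω) p P) atTop (𝓝 0) := by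
  have hsum_le : ∀ (n : ℕ) ω, ‖∑ i ∈ range n, (1 / n : ℝ) • Y ((i : ℝ) / n) ω‖ ≤ C := by
    intro n ω
    have hC0 : 0 ≤ C := (norm_nonneg _).trans (hC 0 ω)
    rw [← smul_sum, norm_smul, norm_div, norm_one, RCLike.norm_natCast, one_div_mul_eq_div]
    refine div_le_of_le_mul₀ n.cast_nonneg hC0 ?_
    simpa [mul_comm] using norm_sum_le_of_le (range n) fun i _ => hC ((i : ℝ) / n) ω
  have hint_le : ∀ ω, ‖∫ t in (0 : ℝ)..1, Y t ω‖ ≤ C := fun ω => by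
    simpa using intervalIntegral.norm_integral_le_of_norm_le_const (a := 0) (b := 1)
      fun t _ => hC t ω
  exact tendsto_eLpNorm_zero_of_bounded hp hp_top
    (aestronglyMeasurable_leftRiemannSum_sub_integral hY hcont)
    (fun n => ae_of_all _ fun ω => norm_sub_le_of_le (hsum_le n ω) (hint_le ω))
    (hcont.mono fun ω hω => tendsto_sub_nhds_zero_iff.2
      (tendsto_leftRiemannSum (g := fun t => Y t ω) hω))

lemma eLpNorm_two_sq (X : Ω → ℝ) : eLpNorm X 2 P ^ 2 = ∫⁻ ω, ‖X ω ^ 2‖ₑ ∂P := by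
  simpa [enorm_pow] using eLpNorm_nnreal_pow_eq_lintegral (f := X) (μ := P) two_ne_zero

lemma tendsto_integral_sq_of_tendsto_eLpNorm_two {ι : Type*} {l : Filter ι} {X : ι → Ω → ℝ}
    (hX : Tendsto (fun n => eLpNorm (X n) 2 P) l (𝓝 0)) :
    Tendsto (fun n => ∫ ω, X n ω ^ 2 ∂P) l (𝓝 0) := by
  rw [tendsto_zero_iff_enorm_tendsto_zero]
  refine tendsto_of_tendsto_of_tendsto_of_le_of_le tendsto_const_nhds
    (by simpa using ENNReal.Tendsto.pow (n := 2) hX) (fun _ => zero_le) fun n => ?_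
  exact (enorm_integral_le_lintegral_enorm _).trans_eq (eLpNorm_two_sq _).symm

lemma tendsto_eLpNorm_two_of_integral_sq_le {ι : Type*} {l : Filter ι} {X : ι → Ω → ℝ}
    {b : ι → ℝ} (hX : ∀ n, MemLp (X n) 2 P) (hb : ∀ n, ∫ ω, X n ω ^ 2 ∂P ≤ b n)
    (hb0 : Tendsto b l (𝓝 0)) : Tendsto (fun n => eLpNorm (X n) 2 P) l (𝓝 0) := by
  have hsq : ∀ n, eLpNorm (X n) 2 P ^ 2 ≤ ENNReal.ofReal (b n) := fun n => by
    rw [eLpNorm_two_sq, ← ofReal_integral_norm_eq_lintegral_enorm (hX n).integrable_sq]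
    simpa using ENNReal.ofReal_le_ofReal (hb n)
  have hlim : Tendsto (fun n => ENNReal.ofReal (b n) ^ (2⁻¹ : ℝ)) l (𝓝 0) := by
    simpa using (ENNReal.tendsto_ofReal hb0).ennrpow_const 2⁻¹
  refine tendsto_of_tendsto_of_tendsto_of_le_of_le tendsto_const_nhds hlim (fun _ => zero_le)
    fun n => ?_
  rw [ENNReal.le_rpow_inv_iff two_pos]
  exact_mod_cast hsq n

end LpConvergence

section MartingaleDifferences

lemma integral_sq_sum_of_orthogonal {ι : Type*} {s : Finset ι} {X : ι → Ω → ℝ}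
    (hX : ∀ i ∈ s, MemLp (X i) 2 P)
    (horth : ∀ i ∈ s, ∀ j ∈ s, i ≠ j → ∫ ω, X i ω * X j ω ∂P = 0) :
    ∫ ω, (∑ i ∈ s, X i ω) ^ 2 ∂P = ∑ i ∈ s, ∫ ω, X i ω ^ 2 ∂P := by
  have hint : ∀ i ∈ s, ∀ j ∈ s, Integrable (fun ω => X i ω * X j ω) P :=
    fun i hi j hj => (hX i hi).integrable_mul (hX j hj)
  simp_rw [sq, sum_mul_sum]
  rw [integral_finsetSum _ fun i hi => integrable_finsetSum _ (hint i hi)]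
  refine sum_congr rfl fun i hi => ?_
  rw [integral_finsetSum _ (hint i hi)]
  exact sum_eq_single_of_mem i hi fun j hj hji => horth i hi j hj hji.symm

lemma integral_mul_eq_zero_of_indep {m : MeasurableSpace Ω} (hm : m ≤ mΩ) {V Z : Ω → ℝ}
    (hV : Measurable[m] V) (hZ : Measurable[mΩ] Z)
    (hindep : Indep (MeasurableSpace.comap Z inferInstance) m P) (hmean : ∫ ω, Z ω ∂P = 0) :
    ∫ ω, V ω * Z ω ∂P = 0 := by
  have hVZ : IndepFun V Z P :=
    (IndepFun_iff_Indep V Z P).2 (indep_of_indep_of_le_left hindep.symm hV.comap_le)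
  rw [hVZ.integral_fun_mul_eq_mul_integral (hV.mono hm le_rfl).aestronglyMeasurable
    hZ.aestronglyMeasurable, hmean, mul_zero]

lemma integral_sq_sum_mul_le_of_indep {m : ℕ → MeasurableSpace Ω} (hm : Monotone m)
    (hmΩ : ∀ i, m i ≤ mΩ) {n : ℕ} {W Z : ℕ → Ω → ℝ} {C : ℝ}
    (hW : ∀ i < n, Measurable[m i] (W i)) (hC : ∀ i ω, |W i ω| ≤ C)
    (hZ : ∀ i < n, Measurable[m (i + 1)] (Z i)) (hZ2 : ∀ i < n, MemLp (Z i) 2 P)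
    (hindep : ∀ i < n, Indep (MeasurableSpace.comap (Z i) inferInstance) (m i) P)
    (hmean : ∀ i < n, ∫ ω, Z i ω ∂P = 0) :
    ∫ ω, (∑ i ∈ range n, W i ω * Z i ω) ^ 2 ∂P ≤ C ^ 2 * ∑ i ∈ range n, ∫ ω, Z i ω ^ 2 ∂P := by
  have hX2 : ∀ i < n, MemLp (fun ω => W i ω * Z i ω) 2 P := fun i hi =>
    (hZ2 i hi).mul' (memLp_top_of_bound ((hW i hi).mono (hmΩ i) le_rfl).aestronglyMeasurable C
      (ae_of_all _ (hC i)))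
  have horth_lt : ∀ i j, i < j → j < n → ∫ ω, W i ω * Z i ω * (W j ω * Z j ω) ∂P = 0 := by
    intro i j hij hj
    have hV : Measurable[m j] fun ω => W i ω * Z i ω * W j ω :=
      (((hW i (hij.trans hj)).mono (hm hij.le) le_rfl).mul
        ((hZ i (hij.trans hj)).mono (hm hij) le_rfl)).mul (hW j hj)
    simpa only [mul_assoc] using integral_mul_eq_zero_of_indep (hmΩ j) hV
      ((hZ j hj).mono (hmΩ _) le_rfl) (hindep j hj) (hmean j hj)
  have horth : ∀ i ∈ range n, ∀ j ∈ range n, i ≠ j →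
      ∫ ω, W i ω * Z i ω * (W j ω * Z j ω) ∂P = 0 := by
    intro i hi j hj hij
    rcases hij.lt_or_gt with hlt | hgt
    · exact horth_lt i j hlt (mem_range.1 hj)
    · simpa only [mul_comm] using horth_lt j i hgt (mem_range.1 hi)
  rw [integral_sq_sum_of_orthogonal (fun i hi => hX2 i (mem_range.1 hi)) horth, mul_sum]
  refine sum_le_sum fun i hi => ?_
  rw [← integral_const_mul]
  refine integral_mono (hX2 i (mem_range.1 hi)).integrable_sq
    ((hZ2 i (mem_range.1 hi)).integrable_sq.const_mul _) fun ω => ?_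
  simp only [mul_pow]
  exact mul_le_mul_of_nonneg_right (sq_le_sq' (abs_le.1 (hC i ω)).1 (abs_le.1 (hC i ω)).2)
    (sq_nonneg _)

end MartingaleDifferences

section GaussianSquare

lemma memLp_two_sq_sub_gaussianReal (v : ℝ≥0) (c : ℝ) :
    MemLp (fun x : ℝ => x ^ 2 - c) 2 (gaussianReal 0 v) := by
  refine MemLp.sub ((memLp_two_iff_integrable_sq (by fun_prop)).2 ?_) (memLp_const c)
  simp only [← pow_mul]
  exact integrable_pow_of_mem_interior_integrableExpSet (X := fun x : ℝ => x) (by simp) _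

lemma integral_sq_sub_variance_gaussianReal (v : ℝ≥0) :
    ∫ x, (x ^ 2 - (v : ℝ)) ∂gaussianReal 0 v = 0 := by
  have hvar := variance_fun_id_gaussianReal (μ := 0) (v := v)
  rw [variance_eq_integral (by fun_prop)] at hvar
  have hsq : Integrable (fun x : ℝ => x ^ 2) (gaussianReal 0 v) :=
    (memLp_id_gaussianReal 2).integrable_sq
  rw [integral_sub hsq (integrable_const _)]
  simpa [sub_eq_zero] using hvar

lemma integral_sq_sub_variance_sq_gaussianReal (v : ℝ≥0) :
    ∫ x, (x ^ 2 - (v : ℝ)) ^ 2 ∂gaussianReal 0 v =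
      (v : ℝ) ^ 2 * ∫ x, (x ^ 2 - 1) ^ 2 ∂gaussianReal 0 1 := by
  have hscale : (gaussianReal 0 1).map (√v * ·) = gaussianReal 0 v := by
    rw [gaussianReal_map_const_mul, mul_zero]
    congr 1
    ext
    simp
  rw [← hscale, integral_map (by fun_prop) (by fun_prop), ← integral_const_mul]
  refine integral_congr_ae (ae_of_all _ fun x => ?_)
  simp only [mul_pow, Real.sq_sqrt v.coe_nonneg]
  ring

end GaussianSquare

lemma abs_sum_mul_sq_le {n : ℕ} (hn : 0 < n) {r d : ℕ → ℝ} {ε C : ℝ}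
    (hr : ∀ i < n, |r i| ≤ ε) (hεC : ε ≤ C) :
    |∑ i ∈ range n, r i * d i ^ 2| ≤ ε + |∑ i ∈ range n, C * (d i ^ 2 - 1 / n)| := by
  have hε : 0 ≤ ε := (abs_nonneg _).trans (hr 0 hn)
  have hn0 : (n : ℝ) ≠ 0 := by positivity
  have hsum : ∑ i ∈ range n, d i ^ 2 = 1 + ∑ i ∈ range n, (d i ^ 2 - 1 / n) := by
    rw [sum_sub_distrib, sum_const, card_range, nsmul_eq_mul, mul_one_div_cancel hn0]
    ring
  calc |∑ i ∈ range n, r i * d i ^ 2|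
      ≤ ∑ i ∈ range n, ε * d i ^ 2 := by
        refine (abs_sum_le_sum_abs _ _).trans (sum_le_sum fun i hi => ?_)
        rw [abs_mul, abs_of_nonneg (sq_nonneg (d i))]
        exact mul_le_mul_of_nonneg_right (hr i (mem_range.1 hi)) (sq_nonneg _)
    _ = ε + ε * ∑ i ∈ range n, (d i ^ 2 - 1 / n) := by rw [← mul_sum, hsum]; ring
    _ ≤ ε + C * |∑ i ∈ range n, (d i ^ 2 - 1 / n)| := by
      gcongr ε + ?_
      exact (mul_le_mul_of_nonneg_left (le_abs_self _) hε).trans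
        (mul_le_mul_of_nonneg_right hεC (abs_nonneg _))
    _ = ε + |∑ i ∈ range n, C * (d i ^ 2 - 1 / n)| := by
      rw [← mul_sum, abs_mul, abs_of_nonneg (hε.trans hεC)]

/-- The measurability, the law of the increments and their independence of the past in the
definition of a standard Brownian motion on `[0, 1]`; neither the starting point nor the continuity
of the paths is prescribed. The index set is `ℝ`, and the past of `s` consists of all `r ≤ s`,
including negative times. -/
structure HasBrownianIncrements (B : ℝ → Ω → ℝ) (P : Measure Ω) : Prop where
  measurable : ∀ t, Measurable (B t)
  map_sub : ∀ s t : ℝ, 0 ≤ s → s ≤ t → t ≤ 1 →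
    P.map (fun ω => B t ω - B s ω) = gaussianReal 0 (Real.toNNReal (t - s))
  indepFun_past : ∀ s t : ℝ, 0 ≤ s → s ≤ t → t ≤ 1 →
    IndepFun (fun ω => B t ω - B s ω) (fun ω => fun r : Set.Iic s => B r ω) P

/-- The increment of the process `B` over the `i`-th cell `[i/n, (i+1)/n]` of the uniform
partition of `[0, 1]` into `n` cells. -/
noncomputable def cellIncrement (B : ℝ → Ω → ℝ) (n i : ℕ) (ω : Ω) : ℝ :=
  B (((i : ℝ) + 1) / n) ω - B ((i : ℝ) / n) ω

namespace HasBrownianIncrements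

variable {B : ℝ → Ω → ℝ}

/-- The natural filtration of `B`, which records the past at each time. -/
def past (hB : HasBrownianIncrements B P) : Filtration ℝ mΩ :=
  Filtration.natural B fun t => (hB.measurable t).stronglyMeasurable

lemma measurable_past (hB : HasBrownianIncrements B P) {s t : ℝ} (hst : s ≤ t) :
    Measurable[hB.past t] (B s) :=
  ((Filtration.stronglyAdapted_natural
    fun t => (hB.measurable t).stronglyMeasurable).stronglyMeasurable_le hst).measurable

lemma measurable_cellIncrement (hB : HasBrownianIncrements B P) (n i : ℕ) :
    Measurable (cellIncrement B n i) :=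
  (hB.measurable _).sub (hB.measurable _)

lemma hasLaw_cellIncrement (hB : HasBrownianIncrements B P) {n i : ℕ} (hi : i < n) :
    HasLaw (cellIncrement B n i) (gaussianReal 0 (1 / n)) P where
  aemeasurable := (hB.measurable_cellIncrement n i).aemeasurable
  map_eq := by
    have hle := div_le_add_one_div n i
    have hlength : Real.toNNReal (((i : ℝ) + 1) / n - (i : ℝ) / n) = 1 / n := by
      rw [show ((i : ℝ) + 1) / n - (i : ℝ) / n = ((1 / n : ℝ≥0) : ℝ) by push_cast; ring,
        Real.toNNReal_coe]
    rw [← hlength]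
    exact hB.map_sub _ _ (Icc_div_subset_unitInterval hi (Set.left_mem_Icc.2 hle)).1 hle
      (Icc_div_subset_unitInterval hi (Set.right_mem_Icc.2 hle)).2

lemma indep_cellIncrement_past (hB : HasBrownianIncrements B P) {n i : ℕ} (hi : i < n) :
    Indep (MeasurableSpace.comap (cellIncrement B n i) inferInstance)
      (hB.past ((i : ℝ) / n)) P := by
  have hle := div_le_add_one_div n i
  rw [past, Filtration.natural_eq_comap]
  exact (IndepFun_iff_Indep _ _ _).1 (hB.indepFun_past _ _
    (Icc_div_subset_unitInterval hi (Set.left_mem_Icc.2 hle)).1 hle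
    (Icc_div_subset_unitInterval hi (Set.right_mem_Icc.2 hle)).2)

lemma memLp_two_cellIncrement_sq_sub (hB : HasBrownianIncrements B P) {n i : ℕ} (hi : i < n) :
    MemLp (fun ω => cellIncrement B n i ω ^ 2 - 1 / n) 2 P := by
  have hlaw := hB.hasLaw_cellIncrement hi
  have h := memLp_two_sq_sub_gaussianReal (1 / n) (1 / n)
  rw [← hlaw.map_eq] at h
  exact h.comp_of_map hlaw.aemeasurable

lemma integral_cellIncrement_sq_sub (hB : HasBrownianIncrements B P) {n i : ℕ} (hi : i < n) :
    ∫ ω, (cellIncrement B n i ω ^ 2 - 1 / n) ∂P = 0 := by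
  have h := (hB.hasLaw_cellIncrement hi).integral_comp (f := fun x => x ^ 2 - 1 / (n : ℝ))
    (by fun_prop)
  exact h.trans (by simpa using integral_sq_sub_variance_gaussianReal (1 / n))

lemma integral_cellIncrement_sq_sub_sq (hB : HasBrownianIncrements B P) {n i : ℕ} (hi : i < n) :
    ∫ ω, (cellIncrement B n i ω ^ 2 - 1 / n) ^ 2 ∂P =
      (1 / n : ℝ) ^ 2 * ∫ x, (x ^ 2 - 1) ^ 2 ∂gaussianReal 0 1 := by
  have h := (hB.hasLaw_cellIncrement hi).integral_comp (f := fun x => (x ^ 2 - 1 / (n : ℝ)) ^ 2)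
    (by fun_prop)
  exact h.trans (by simpa using integral_sq_sub_variance_sq_gaussianReal (1 / n))

lemma integral_sq_sum_mul_cellIncrement_sq_sub_le (hB : HasBrownianIncrements B P) {g : ℝ → ℝ}
    {C : ℝ} (hg : Measurable g) (hC : ∀ x, |g x| ≤ C) (n : ℕ) :
    ∫ ω, (∑ i ∈ range n, g (B ((i : ℝ) / n) ω) * (cellIncrement B n i ω ^ 2 - 1 / n)) ^ 2 ∂P ≤
      C ^ 2 * (∫ x, (x ^ 2 - 1) ^ 2 ∂gaussianReal 0 1) * (1 / n : ℝ) := by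
  have hgrid : Monotone fun i : ℕ => (i : ℝ) / n := fun i j hij => by
    dsimp only
    gcongr
  have hincr : ∀ i : ℕ, Measurable[hB.past ((i + 1 : ℕ) / n)] (cellIncrement B n i) := fun i =>
    (hB.measurable_past (by push_cast; rfl)).sub (hB.measurable_past (hgrid i.le_succ))
  refine (integral_sq_sum_mul_le_of_indep (m := fun i : ℕ => hB.past ((i : ℝ) / n))
    (W := fun i ω => g (B ((i : ℝ) / n) ω)) (Z := fun i ω => cellIncrement B n i ω ^ 2 - 1 / n)
    (fun _ _ hij => hB.past.mono (hgrid hij)) (fun _ => hB.past.le _)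
    (fun i _ => hg.comp (hB.measurable_past le_rfl)) (fun _ _ => hC _)
    (fun i _ => ((hincr i).pow_const 2).sub_const _)
    (fun i hi => hB.memLp_two_cellIncrement_sq_sub hi)
    (fun i hi => indep_of_indep_of_le_left (hB.indep_cellIncrement_past hi)
      (((comap_measurable _).pow_const 2).sub_const _).comap_le)
    (fun i hi => hB.integral_cellIncrement_sq_sub hi)).trans_eq ?_
  rw [sum_congr rfl fun i hi => hB.integral_cellIncrement_sq_sub_sq (mem_range.1 hi), sum_const,
    card_range, nsmul_eq_mul]
  field_simp

lemma memLp_two_sum_mul_cellIncrement_sq_sub (hB : HasBrownianIncrements B P) {g : ℝ → ℝ}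
    {C : ℝ} (hg : Measurable g) (hC : ∀ x, |g x| ≤ C) (n : ℕ) :
    MemLp (fun ω => ∑ i ∈ range n, g (B ((i : ℝ) / n) ω) * (cellIncrement B n i ω ^ 2 - 1 / n))
      2 P :=
  memLp_finsetSum _ fun _ hi => (hB.memLp_two_cellIncrement_sq_sub (mem_range.1 hi)).mul'
    (memLp_top_of_bound (hg.comp (hB.measurable _)).aestronglyMeasurable C
      (ae_of_all _ fun _ => hC _))

lemma tendsto_eLpNorm_sum_mul_cellIncrement_sq_sub (hB : HasBrownianIncrements B P) {g : ℝ → ℝ}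
    {C : ℝ} (hg : Measurable g) (hC : ∀ x, |g x| ≤ C) :
    Tendsto (fun n : ℕ => eLpNorm (fun ω => ∑ i ∈ range n,
      g (B ((i : ℝ) / n) ω) * (cellIncrement B n i ω ^ 2 - 1 / n)) 2 P) atTop (𝓝 0) := by
  have hbound := tendsto_one_div_atTop_nhds_zero_nat.const_mul
    (C ^ 2 * ∫ x, (x ^ 2 - 1) ^ 2 ∂gaussianReal 0 1)
  rw [mul_zero] at hbound
  exact tendsto_eLpNorm_two_of_integral_sq_le (hB.memLp_two_sum_mul_cellIncrement_sq_sub hg hC)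
    (hB.integral_sq_sum_mul_cellIncrement_sq_sub_le hg hC) hbound

lemma isProbabilityMeasure (hB : HasBrownianIncrements B P) : IsProbabilityMeasure P :=
  (hB.hasLaw_cellIncrement one_pos).isProbabilityMeasure

lemma tendsto_eLpNorm_sum_mul_cellIncrement_sq_of_tendsto_iSup (hB : HasBrownianIncrements B P)
    {r : ℕ → ℕ → Ω → ℝ} {C : ℝ} (hr : ∀ n i, Measurable (r n i)) (hC : ∀ n i ω, |r n i ω| ≤ C)
    (hr0 : ∀ᵐ ω ∂P, Tendsto (fun n => ⨆ i : Fin n, |r n i ω|) atTop (𝓝 0)) :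
    Tendsto (fun n : ℕ => eLpNorm (fun ω => ∑ i ∈ range n, r n i ω * cellIncrement B n i ω ^ 2) 2 P)
      atTop (𝓝 0) := by
  have := hB.isProbabilityMeasure
  have hsup_le : ∀ n ω, ⨆ i : Fin n, |r n i ω| ≤ C :=
    fun n ω => Real.iSup_le (fun i => hC n i ω) ((abs_nonneg _).trans (hC 0 0 ω))
  have hsup_nonneg : ∀ n ω, 0 ≤ ⨆ i : Fin n, |r n i ω| :=
    fun n ω => Real.iSup_nonneg fun _ => abs_nonneg _
  have hsup_meas : ∀ n, AEStronglyMeasurable (fun ω => ⨆ i : Fin n, |r n i ω|) P :=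
    fun n => (Measurable.iSup fun i : Fin n => (hr n i).abs).aestronglyMeasurable
  have hsup : Tendsto (fun n => eLpNorm (fun ω => ⨆ i : Fin n, |r n i ω|) 2 P) atTop (𝓝 0) :=
    tendsto_eLpNorm_zero_of_bounded one_le_two ENNReal.ofNat_ne_top hsup_meas
      (fun n => ae_of_all _ fun ω => (abs_of_nonneg (hsup_nonneg n ω)).trans_le (hsup_le n ω)) hr0
  have hqv := hB.tendsto_eLpNorm_sum_mul_cellIncrement_sq_sub (g := fun _ => C) measurable_const
    fun _ => le_rfl
  have hqv_memLp := hB.memLp_two_sum_mul_cellIncrement_sq_sub (g := fun _ => C) measurable_const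
    fun _ => le_rfl
  have hbound := tendsto_eLpNorm_add one_le_two hsup_meas (fun n => (hqv_memLp n).1.norm) hsup
    (by simpa only [eLpNorm_norm] using hqv)
  refine tendsto_of_tendsto_of_tendsto_of_le_of_le' tendsto_const_nhds hbound
    (Eventually.of_forall fun _ => zero_le) ((eventually_gt_atTop 0).mono fun n hn => ?_)
  exact eLpNorm_mono_real fun ω => abs_sum_mul_sq_le hn
    (fun i hi => le_ciSup (f := fun i : Fin n => |r n i ω|) (Set.finite_range _).bddAbove ⟨i, hi⟩)
    (hsup_le n ω)

lemma aestronglyMeasurable_sum_mul_cellIncrement_sq_sub_integral (hB : HasBrownianIncrements B P)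
    (hcont : ∀ᵐ ω ∂P, ContinuousOn (fun t => B t ω) (Set.Icc 0 1)) {g : ℝ → ℝ}
    (hg : Continuous g) (n : ℕ) :
    AEStronglyMeasurable (fun ω =>
      ∑ i ∈ range n, g (B ((i : ℝ) / n) ω) * cellIncrement B n i ω ^ 2 -
        ∫ t in (0 : ℝ)..1, g (B t ω)) P := by
  have hgB : ∀ t, Measurable fun ω => g (B t ω) := fun t => hg.measurable.comp (hB.measurable t)
  have hsum : Measurable fun ω =>
      ∑ i ∈ range n, g (B ((i : ℝ) / n) ω) * cellIncrement B n i ω ^ 2 :=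
    Finset.measurable_fun_sum _ fun i _ =>
      (hgB _).mul ((hB.measurable_cellIncrement n i).pow_const 2)
  exact hsum.aestronglyMeasurable.sub (aestronglyMeasurable_integral_of_continuousOn
    (Y := fun t ω => g (B t ω)) (fun t => (hgB t).aestronglyMeasurable)
    (hcont.mono fun _ hω => hg.comp_continuousOn hω))

lemma tendsto_eLpNorm_sum_mul_cellIncrement_sq_sub_integral (hB : HasBrownianIncrements B P)
    (hcont : ∀ᵐ ω ∂P, ContinuousOn (fun t => B t ω) (Set.Icc 0 1)) {g : ℝ → ℝ} {C : ℝ}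
    (hg : Continuous g) (hC : ∀ x, |g x| ≤ C) :
    Tendsto (fun n : ℕ => eLpNorm (fun ω =>
      ∑ i ∈ range n, g (B ((i : ℝ) / n) ω) * cellIncrement B n i ω ^ 2 -
        ∫ t in (0 : ℝ)..1, g (B t ω)) 2 P) atTop (𝓝 0) := by
  have := hB.isProbabilityMeasure
  have hgB : ∀ t, AEStronglyMeasurable (fun ω => g (B t ω)) P :=
    fun t => (hg.measurable.comp (hB.measurable t)).aestronglyMeasurable
  have hpath : ∀ᵐ ω ∂P, ContinuousOn (fun t => g (B t ω)) (Set.Icc 0 1) :=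
    hcont.mono fun _ hω => hg.comp_continuousOn hω
  have hriemann := tendsto_eLpNorm_leftRiemannSum_sub_integral (Y := fun t ω => g (B t ω))
    one_le_two ENNReal.ofNat_ne_top hgB (fun t ω => hC (B t ω)) hpath
  have hriemann_meas := aestronglyMeasurable_leftRiemannSum_sub_integral
    (Y := fun t ω => g (B t ω)) hgB hpath
  have hmartingale := hB.tendsto_eLpNorm_sum_mul_cellIncrement_sq_sub hg.measurable hC
  have hmartingale_memLp := hB.memLp_two_sum_mul_cellIncrement_sq_sub hg.measurable hC
  have hsplit : ∀ (n : ℕ) ω,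
      ∑ i ∈ range n, g (B ((i : ℝ) / n) ω) * cellIncrement B n i ω ^ 2 -
          ∫ t in (0 : ℝ)..1, g (B t ω) =
        (∑ i ∈ range n, (1 / n : ℝ) • g (B ((i : ℝ) / n) ω) - ∫ t in (0 : ℝ)..1, g (B t ω)) +
          ∑ i ∈ range n, g (B ((i : ℝ) / n) ω) * (cellIncrement B n i ω ^ 2 - 1 / n) := by
    intro n ω
    rw [sub_add_eq_add_sub, ← sum_add_distrib]
    exact congrArg (· - _) (sum_congr rfl fun i _ => by rw [smul_eq_mul]; ring)
  simp only [hsplit]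
  exact tendsto_eLpNorm_add one_le_two hriemann_meas (fun n => (hmartingale_memLp n).1)
    hriemann hmartingale

theorem tendsto_eLpNorm_weighted_quadraticVariation_sub_integral (hB : HasBrownianIncrements B P)
    (hcont : ∀ᵐ ω ∂P, ContinuousOn (fun t => B t ω) (Set.Icc 0 1)) {q : ℝ → ℝ → ℝ} {C : ℝ}
    (hq : Continuous (Function.uncurry q)) (hC : ∀ x h, |q x h| ≤ C) :
    Tendsto (fun n : ℕ => eLpNorm (fun ω => ∑ i ∈ range n,
      q (B ((i : ℝ) / n) ω) (cellIncrement B n i ω) * cellIncrement B n i ω ^ 2 -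
        ∫ t in (0 : ℝ)..1, q (B t ω) 0) 2 P) atTop (𝓝 0) := by
  have hq0 : Continuous fun x => q x 0 := hq.comp (continuous_id.prodMk continuous_const)
  let r : ℕ → ℕ → Ω → ℝ := fun n i ω =>
    q (B ((i : ℝ) / n) ω) (cellIncrement B n i ω) - q (B ((i : ℝ) / n) ω) 0
  have hr : ∀ n i, Measurable (r n i) := fun n i =>
    (hq.measurable.comp ((hB.measurable _).prodMk (hB.measurable_cellIncrement n i))).sub
      (hq.measurable.comp ((hB.measurable _).prodMk measurable_const))
  have hrC : ∀ n i ω, |r n i ω| ≤ C + C := fun n i ω =>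
    (abs_sub _ _).trans (add_le_add (hC _ _) (hC _ _))
  have hr0 : ∀ᵐ ω ∂P, Tendsto (fun n => ⨆ i : Fin n, |r n i ω|) atTop (𝓝 0) :=
    hcont.mono fun ω hω => by
      simpa only [r, cellIncrement] using tendsto_iSup_abs_apply_increment_sub hq hω
  have hremainder_meas : ∀ n : ℕ, AEStronglyMeasurable
      (fun ω => ∑ i ∈ range n, r n i ω * cellIncrement B n i ω ^ 2) P := fun n =>
    (Finset.measurable_fun_sum _ fun i _ =>
      (hr n i).mul ((hB.measurable_cellIncrement n i).pow_const 2)).aestronglyMeasurable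
  have hleft_meas := hB.aestronglyMeasurable_sum_mul_cellIncrement_sq_sub_integral
    (g := fun x => q x 0) hcont hq0
  have hleft := hB.tendsto_eLpNorm_sum_mul_cellIncrement_sq_sub_integral
    (g := fun x => q x 0) hcont hq0 fun x => hC x 0
  have hremainder := hB.tendsto_eLpNorm_sum_mul_cellIncrement_sq_of_tendsto_iSup hr hrC hr0
  refine (tendsto_eLpNorm_add one_le_two hremainder_meas hleft_meas hremainder hleft).congr
    fun n => ?_
  congr 1 with ω
  simp only [Pi.add_apply, r]
  rw [← add_sub_assoc, ← sum_add_distrib]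
  exact congrArg (· - _) (sum_congr rfl fun i _ => by ring)

end HasBrownianIncrements

theorem midpoint_sub_leftpoint_tendsto_ito_correction_general {B : ℝ → Ω → ℝ}
    (hB : HasBrownianIncrements B P)
    (hcont : ∀ᵐ ω ∂P, ContinuousOn (fun t => B t ω) (Set.Icc 0 1)) {f : ℝ → ℝ} {C : ℝ}
    (hf : ContDiff ℝ 1 f) (hC : ∀ a, |deriv f a| ≤ C) (θ : ℝ) :
    Tendsto (fun n : ℕ => eLpNorm (fun ω =>
      ∑ i ∈ range n, f (B ((i : ℝ) / n) ω + θ * cellIncrement B n i ω) * cellIncrement B n i ω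
        - ∑ i ∈ range n, f (B ((i : ℝ) / n) ω) * cellIncrement B n i ω
        - θ * ∫ t in (0 : ℝ)..1, deriv f (B t ω)) 2 P) atTop (𝓝 0) := by
  have hq : Continuous (Function.uncurry fun x h => θ * meanDeriv f x (θ * h)) :=
    continuous_const.mul ((continuous_uncurry_meanDeriv hf).comp
      (by fun_prop : Continuous fun p : ℝ × ℝ => (p.1, θ * p.2)))
  have hqC : ∀ x h, |θ * meanDeriv f x (θ * h)| ≤ |θ| * C := fun x h => by
    rw [abs_mul]
    exact mul_le_mul_of_nonneg_left (abs_meanDeriv_le hC _ _) (abs_nonneg θ)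
  refine (hB.tendsto_eLpNorm_weighted_quadraticVariation_sub_integral hcont hq hqC).congr
    fun n => ?_
  congr 1 with ω
  rw [← sum_sub_distrib, mul_zero, ← intervalIntegral.integral_const_mul]
  simp only [meanDeriv_zero]
  refine congrArg (· - _) (sum_congr rfl fun i _ => ?_)
  linear_combination cellIncrement B n i ω *
    mul_meanDeriv hf (B ((i : ℝ) / n) ω) (θ * cellIncrement B n i ω)

end Probability

/-- Itô–Stratonovich correction: for a standard Brownian motion `B` on `[0,1]` and a smooth
bounded `f` with bounded first and second derivatives, the difference between the midpoint
(Stratonovich) and left-point (Itô) Riemann sums along the uniform partition `t_i = i/n`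
converges in `L²(P)` to `(1/2) ∫_0^1 f'(B_t) dt`. -/
theorem midpoint_sub_leftpoint_tendsto_ito_correction
    {Ω : Type*} [MeasurableSpace Ω] (P : Measure Ω) [IsProbabilityMeasure P]
    (B : ℝ → Ω → ℝ)
    (hmeas : ∀ t, Measurable (B t))
    (hzero : ∀ᵐ ω ∂P, B 0 ω = 0)
    (hgauss : ∀ s t : ℝ, 0 ≤ s → s ≤ t → t ≤ 1 →
      Measure.map (fun ω => B t ω - B s ω) P = gaussianReal 0 (Real.toNNReal (t - s)))
    (hindep : ∀ s t : ℝ, 0 ≤ s → s ≤ t → t ≤ 1 →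
      IndepFun (fun ω => B t ω - B s ω) (fun ω => fun r : Set.Iic s => B r ω) P)
    (hcont : ∀ᵐ ω ∂P, ContinuousOn (fun t => B t ω) (Set.Icc 0 1))
    (f : ℝ → ℝ) (hf : ContDiff ℝ (⊤ : ℕ∞) f)
    (hfb : ∃ C, ∀ a, |f a| ≤ C)
    (hf1b : ∃ C, ∀ a, |deriv f a| ≤ C)
    (hf2b : ∃ C, ∀ a, |deriv (deriv f) a| ≤ C) :
    Tendsto (fun n : ℕ => ∫ ω,
      ((∑ i ∈ Finset.range n,
          f ((B ((i : ℝ) / n) ω + B (((i : ℝ) + 1) / n) ω) / 2)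
            * (B (((i : ℝ) + 1) / n) ω - B ((i : ℝ) / n) ω))
        - (∑ i ∈ Finset.range n,
            f (B ((i : ℝ) / n) ω) * (B (((i : ℝ) + 1) / n) ω - B ((i : ℝ) / n) ω))
        - (1 / 2) * ∫ t in (0:ℝ)..1, deriv f (B t ω)) ^ 2 ∂P)
      atTop (nhds 0) := by
  obtain ⟨C, hC⟩ := hf1b
  have hlim := midpoint_sub_leftpoint_tendsto_ito_correction_general ⟨hmeas, hgauss, hindep⟩ hcont
    (hf.of_le (by exact_mod_cast le_top)) hC (1 / 2)
  have hmid : ∀ x y : ℝ, (x + y) / 2 = x + 1 / 2 * (y - x) := fun x y => by ring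
  simpa only [hmid, cellIncrement] using tendsto_integral_sq_of_tendsto_eLpNorm_two hlim
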